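/- There is an absolute constant C > 0 such that for every integer m ≥ 3 there exists n₀ such that for all n ≥ n₀, the online Ramsey number satisfies r̃(m,n) ≥ n^((2−√2)m − C). -/

import Mathlib

open scoped Classical

namespace OnlineRamseyGame

/-- A valid Builder strategy: it never builds a loop, and along any play the
edges built are pairwise distinct. -/
def ValidBuilder {V : Type*} (B : List Bool → Sym2 V) : Prop :=
  (∀ h : List Bool, ¬ (B h).IsDiag) ∧
  ∀ h : List Bool, ∀ i : ℕ, i < h.length → B (h.take i) ≠ B h

/-- The history of Painter's colors after `t` turns against Painter strategy `P`
(Builder's moves are determined by this history). -/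
def histOf (P : List Bool → Bool) : ℕ → List Bool
  | 0 => []
  | t + 1 => histOf P t ++ [P (histOf P t)]

/-- The graph built by `edge` contains a monochromatic clique on `k` vertices in
color `col` within the first `N` turns. -/
def HasMonoClique {V : Type*} (edge : ℕ → Sym2 V) (color : ℕ → Bool)
    (N k : ℕ) (col : Bool) : Prop :=
  ∃ S : Finset V, S.card = k ∧
    ∀ u ∈ S, ∀ v ∈ S, u ≠ v → ∃ t, t < N ∧ edge t = s(u, v) ∧ color t = col

/-- Builder has a valid strategy winning the `(m,n)` online Ramsey game within `N`
turns against every Painter strategy (red = `true`, blue = `false`). -/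
def BuilderWins (m n N : ℕ) : Prop :=
  ∃ B : List Bool → Sym2 ℕ, ValidBuilder B ∧
    ∀ P : List Bool → Bool,
      HasMonoClique (fun t => B (histOf P t)) (fun t => P (histOf P t)) N m true ∨
      HasMonoClique (fun t => B (histOf P t)) (fun t => P (histOf P t)) N n false

/-- The online Ramsey number `r̃(m,n)`: the least `N` such that Builder can
guarantee a win within `N` turns. -/
noncomputable def onlineRamsey (m n : ℕ) : ℕ := sInf {N | BuilderWins m n N}

/-!
Painter colours every edge independently at random, red with probability `p = n ^ (1 / m - 1)`. Fix
a strategy of Builder. A red `m`-clique can be encoded by one build time for each vertex, at which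
an edge at that vertex is built, and by which end of that edge the vertex is. The union bound over
`N ^ m * 2 ^ m` such codes is too expensive, so `k` disjoint edges of the clique are singled out:
the time at which such an edge is built serves both of its ends, which leaves
`N ^ (m - k) * 2 ^ m` codes.

Given a code, an edge of the clique is recognised as such when it is built, and then is red with
conditional probability `p`, provided that both of its ends are determined by that time. If the `k`
edges form an earliest possible matching, an exchange argument shows that this fails for at most
one of any two opposite edges between two of the `k` edges, so for at most `k * (k - 1)` edges.
Hence the probability of a red clique is at most
`N ^ (m - k) * 2 ^ m * p ^ (m.choose 2 - k * (k - 1))`, and `k ≈ (1 - 1 / √2) * m` yields the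
exponent `(2 - √2) * m`. The same bound with `k = 0` and `1 - p` in place of `p` excludes blue
`n`-cliques, because `p * n = n ^ (1 / m)` dominates `log N`.
-/

open Filter
open scoped ENNReal Finset

section Ramsey

theorem exists_monochromatic {V κ : Type*} [Fintype κ] (c : Sym2 V → κ) (size : κ → ℕ)
    (S : Finset V) (hS : (Fintype.card κ + 1) ^ (∑ i, size i) ≤ #S) :
    ∃ i, ∃ T ⊆ S, #T = size i ∧ (T : Set V).Pairwise fun u v => c s(u, v) = i := by
  induction hs : ∑ i, size i generalizing size S with
  | zero =>
    obtain ⟨x, -⟩ : S.Nonempty := Finset.card_pos.mp (lt_of_lt_of_le (by positivity) hS)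
    have hsize : size (c s(x, x)) = 0 := Finset.sum_eq_zero_iff.mp hs _ (Finset.mem_univ _)
    exact ⟨c s(x, x), ∅, by simp, by simp [hsize], by simp⟩
  | succ s ih =>
    by_cases hzero : ∃ i, size i = 0
    · obtain ⟨i, hi⟩ := hzero
      exact ⟨i, ∅, by simp, by simp [hi], by simp⟩
    push Not at hzero
    rw [hs] at hS
    obtain ⟨x, hx⟩ : S.Nonempty := Finset.card_pos.mp (lt_of_lt_of_le (by positivity) hS)
    have hpigeon : Fintype.card κ * (Fintype.card κ + 1) ^ s ≤ #(S.erase x) := by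
      have hpos : 0 < (Fintype.card κ + 1) ^ s := by positivity
      rw [Finset.card_erase_of_mem hx]
      rw [pow_succ'] at hS
      lia
    obtain ⟨i, -, hi⟩ := Finset.exists_le_card_fiber_of_mul_le_card_of_maps_to
      (f := fun y => c s(x, y)) (fun _ _ => Finset.mem_univ _)
      ⟨c s(x, x), Finset.mem_univ _⟩ hpigeon
    have hsum : ∑ j, Function.update size i (size i - 1) j = s := by
      rw [Finset.sum_update_of_mem (Finset.mem_univ i)]
      have := Finset.add_sum_erase _ size (Finset.mem_univ i)
      have := hzero i
      rw [Finset.sdiff_singleton_eq_erase]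
      lia
    obtain ⟨j, T, hTS, hT, hmono⟩ := ih _ _ (by rwa [hsum]) hsum
    have hTx : ∀ y ∈ T, y ≠ x ∧ y ∈ S ∧ c s(x, y) = i := fun y hy => by
      simpa [and_assoc] using hTS hy
    by_cases hji : j = i
    · subst hji
      refine ⟨j, insert x T, Finset.insert_subset hx fun y hy => (hTx y hy).2.1, ?_, ?_⟩
      · rw [Finset.card_insert_of_notMem fun h => (hTx x h).1 rfl, hT, Function.update_self,
          Nat.sub_add_cancel (Nat.pos_of_ne_zero (hzero j))]
      · rw [Finset.coe_insert]
        refine hmono.insert fun y hy _ => ⟨(hTx y hy).2.2, ?_⟩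
        rw [Sym2.eq_swap, (hTx y hy).2.2]
    · exact ⟨j, T, fun y hy => (hTx y hy).2.1, by rw [hT, Function.update_of_ne hji], hmono⟩

lemma length_histOf (P : List Bool → Bool) (t : ℕ) : (histOf P t).length = t := by
  induction t with
  | zero => rfl
  | succ t ih => rw [histOf, List.length_append, ih, List.length_singleton]

lemma exists_injective_range_eq_not_isDiag :
    ∃ e : ℕ → Sym2 ℕ, Function.Injective e ∧ Set.range e = {z | ¬ z.IsDiag} := by
  have : Infinite {z : Sym2 ℕ // ¬ z.IsDiag} :=
    .of_injective (fun n => ⟨s(0, n + 1), by simp⟩) fun a b h => by simpa using h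
  have : Countable (Sym2 ℕ) := inferInstanceAs (Countable (Quot _))
  obtain ⟨e⟩ : Nonempty (ℕ ≃ {z : Sym2 ℕ // ¬ z.IsDiag}) := nonempty_equiv_of_countable
  refine ⟨fun n => e n, Subtype.val_injective.comp e.injective, ?_⟩
  rw [← Function.comp_def, e.surjective.range_comp, Subtype.range_coe_subtype]

theorem exists_builderWins (m n : ℕ) : ∃ N, BuilderWins m n N := by
  obtain ⟨e, e_inj, e_range⟩ := exists_injective_range_eq_not_isDiag
  have e_invFun : ∀ z : Sym2 ℕ, ¬ z.IsDiag → e (Function.invFun e z) = z := fun z hz =>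
    Function.invFun_eq (by rwa [← Set.mem_range, e_range])
  let size : Bool → ℕ := fun col => if col then m else n
  let R := Finset.range (3 ^ (∑ col, size col))
  obtain ⟨N, hN⟩ := (R.sym2.image (Function.invFun e)).exists_nat_subset_range
  refine ⟨N, fun h => e h.length, ⟨fun h => ?_, fun h i hi => ?_⟩, fun P => ?_⟩
  · exact e_range.le ⟨_, rfl⟩
  · exact e_inj.ne (by simpa using hi.not_ge)
  obtain ⟨col, S, hSR, hS, hmono⟩ := exists_monochromatic
    (fun z => P (histOf P (Function.invFun e z))) size R (by simp [R])
  have hclique : HasMonoClique (fun t => e (histOf P t).length) (fun t => P (histOf P t)) N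
      (size col) col := by
    refine ⟨S, hS, fun u hu v hv huv => ⟨Function.invFun e s(u, v), ?_, ?_, hmono hu hv huv⟩⟩
    · rw [← Finset.mem_range]
      exact hN (Finset.mem_image_of_mem _ (Finset.mk_mem_sym2_iff.mpr ⟨hSR hu, hSR hv⟩))
    · simpa only [length_histOf] using e_invFun _ (by simpa using huv)
  cases col
  · exact .inr hclique
  · exact .inl hclique

end Ramsey

section RandomWord

variable {α : Type*}

/-- The law of a word of `N` independent letters, each with distribution `μ`. -/
noncomputable def randomWord (μ : PMF α) : ℕ → PMF (List α)
  | 0 => PMF.pure []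
  | N + 1 => μ.bind fun x => (randomWord μ N).map (x :: ·)

lemma length_eq_of_mem_support_randomWord {μ : PMF α} {N : ℕ} {ω : List α}
    (hω : ω ∈ (randomWord μ N).support) : ω.length = N := by
  induction N generalizing ω with
  | zero => simpa [randomWord] using hω
  | succ N ih =>
    obtain ⟨x, -, hx⟩ := (PMF.mem_support_bind_iff _ _ _).mp hω
    obtain ⟨ω', hω', rfl⟩ := (PMF.mem_support_map_iff _ _ _).mp hx
    rw [List.length_cons, ih hω']

lemma toOuterMeasure_randomWord_succ (μ : PMF α) (N : ℕ) (A : Set (List α)) :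
    (randomWord μ (N + 1)).toOuterMeasure A =
      ∑' x, μ x * (randomWord μ N).toOuterMeasure {ω | x :: ω ∈ A} := by
  simp only [randomWord, PMF.toOuterMeasure_bind_apply, PMF.toOuterMeasure_map_apply]
  rfl

lemma toOuterMeasure_le_one (μ : PMF α) (A : Set α) : μ.toOuterMeasure A ≤ 1 := by
  rw [PMF.toOuterMeasure_apply, ← μ.tsum_coe]
  exact ENNReal.tsum_le_tsum (Set.indicator_le_self _ _)

/-- The number of positions of `ω` selected by the rule `g`, which decides whether to select the
next letter after seeing the letters before it. -/
noncomputable def selectionCount (g : List α → Prop) (ω : List α) : ℕ :=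
  #{t ∈ Finset.range ω.length | g (ω.take t)}

/-- Every letter of `ω` selected by the rule `g` is `a`, and at least `L` letters are selected. -/
def SelectsOnly (a : α) (g : List α → Prop) (L : ℕ) (ω : List α) : Prop :=
  (∀ t < ω.length, g (ω.take t) → ω[t]? = some a) ∧ L ≤ selectionCount g ω

lemma SelectsOnly.mono {a : α} {g : List α → Prop} {K L : ℕ} {ω : List α}
    (h : SelectsOnly a g L ω) (hKL : K ≤ L) : SelectsOnly a g K ω :=
  ⟨h.1, hKL.trans h.2⟩

lemma selectionCount_cons (g : List α → Prop) (x : α) (ω : List α) :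
    selectionCount g (x :: ω) =
      selectionCount (fun h => g (x :: h)) ω + if g [] then 1 else 0 := by
  simp only [selectionCount, Finset.card_filter, List.length_cons, Finset.sum_range_succ',
    List.take_succ_cons, List.take_zero]
  rfl

lemma SelectsOnly.of_cons {a x : α} {g : List α → Prop} {L : ℕ} {ω : List α}
    (h : SelectsOnly a g L (x :: ω)) :
    SelectsOnly a (fun h => g (x :: h)) (L - if g [] then 1 else 0) ω := by
  refine ⟨fun t ht hg => ?_, ?_⟩
  · simpa using h.1 (t + 1) (by simpa using ht) (by simpa using hg)
  · have := h.2
    rw [selectionCount_cons] at this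
    lia

lemma SelectsOnly.head_eq {a x : α} {g : List α → Prop} {L : ℕ} {ω : List α}
    (h : SelectsOnly a g L (x :: ω)) (hg : g []) : x = a := by
  simpa using h.1 0 (by simp) (by simpa using hg)

theorem toOuterMeasure_selectsOnly_le (μ : PMF α) (a : α) (N : ℕ) (g : List α → Prop) (L : ℕ) :
    (randomWord μ N).toOuterMeasure {ω | SelectsOnly a g L ω} ≤ μ a ^ L := by
  induction N generalizing g L with
  | zero =>
    rcases L with _ | L
    · simpa using toOuterMeasure_le_one _ _
    · simp [randomWord, SelectsOnly, selectionCount]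
  | succ N ih =>
    have hcons : ∀ x, (randomWord μ N).toOuterMeasure {ω | SelectsOnly a g L (x :: ω)} ≤
        μ a ^ (L - if g [] then 1 else 0) := fun x => by
      refine (MeasureTheory.measure_mono ?_).trans (ih (fun h => g (x :: h)) _)
      exact fun _ => SelectsOnly.of_cons
    rcases L with _ | L
    · simpa using toOuterMeasure_le_one _ _
    rw [toOuterMeasure_randomWord_succ]
    by_cases hg : g []
    · have hne : ∀ x ≠ a, {ω | SelectsOnly a g (L + 1) (x :: ω)} = ∅ := fun x hx =>
        Set.eq_empty_of_forall_notMem fun ω h => hx (h.head_eq hg)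
      rw [tsum_eq_single a fun x hx => by simp [hne x hx], pow_succ']
      gcongr
      simpa [hg] using hcons a
    · calc ∑' x, μ x * (randomWord μ N).toOuterMeasure {ω | SelectsOnly a g (L + 1) (x :: ω)}
          ≤ ∑' x, μ x * μ a ^ (L + 1) := by
            gcongr with x
            simpa [hg] using hcons x
        _ = μ a ^ (L + 1) := by rw [ENNReal.tsum_mul_right, μ.tsum_coe, one_mul]

end RandomWord

section Matching

lemma sum_pow_lt_sum_pow {ι : Type*} [Fintype ι] {b : ℕ} {A : Finset ι} (hA : A.Nonempty)
    (hb : #A < b) {f f' : ι → ℕ} (hoff : ∀ i ∉ A, f' i = f i) (hlt : ∀ i ∈ A, f' i < A.sup f) :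
    ∑ i, b ^ f' i < ∑ i, b ^ f i := by
  obtain ⟨a, ha, hsup⟩ := A.exists_mem_eq_sup hA f
  rw [hsup] at hlt
  have hcompl : ∑ i ∈ Aᶜ, b ^ f' i = ∑ i ∈ Aᶜ, b ^ f i :=
    Finset.sum_congr rfl fun i hi => by rw [hoff i (Finset.mem_compl.mp hi)]
  rw [← Finset.sum_add_sum_compl A, ← Finset.sum_add_sum_compl A (fun i => b ^ f i), hcompl]
  gcongr ?_ + _
  calc ∑ i ∈ A, b ^ f' i
      ≤ #A * b ^ (f a - 1) := Finset.sum_le_card_nsmul _ _ _ fun i hi =>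
        Nat.pow_le_pow_right (by lia) (Nat.le_sub_one_of_lt (hlt i hi))
    _ < b * b ^ (f a - 1) := by
        have : 0 < b ^ (f a - 1) := Nat.pow_pos (by lia)
        gcongr
    _ = b ^ f a := mul_pow_sub_one (Nat.ne_zero_of_lt (hlt a ha)) b
    _ ≤ ∑ i ∈ A, b ^ f i := Finset.single_le_sum (f := fun i => b ^ f i) (by simp) ha

lemma card_filter_not_isDiag (L : Type*) [Fintype L] [DecidableEq L] :
    #{z : Sym2 L | ¬ z.IsDiag} = (Fintype.card L).choose 2 := by
  rw [← Sym2.card_subtype_not_diag, Fintype.card_subtype]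

lemma card_le_of_map_not_notMem {ι : Type*} [Fintype ι] {E : Finset (Sym2 (ι × Bool))}
    (hdiag : ∀ z ∈ E, ¬ z.IsDiag) (hmatch : ∀ i, s((i, false), (i, true)) ∉ E)
    (hflip : ∀ z ∈ E, z.map (Prod.map id not) ∉ E) :
    #E ≤ Fintype.card ι * (Fintype.card ι - 1) := by
  let flip : Sym2 (ι × Bool) → Sym2 (ι × Bool) := Sym2.map (Prod.map id not)
  have flip_flip : Function.Involutive flip := fun z => by
    change (z.map _).map _ = z
    rw [Sym2.map_map, (Function.Involutive.prodMap (fun _ => rfl) Bool.not_not).comp_self,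
      Sym2.map_id, id]
  have flip_isDiag : ∀ z, (flip z).IsDiag ↔ z.IsDiag := fun z =>
    Sym2.isDiag_map (Function.injective_id.prodMap Bool.not_injective)
  let M : Finset (Sym2 (ι × Bool)) := Finset.univ.image fun i => s((i, false), (i, true))
  have hM : #M = Fintype.card ι :=
    Finset.card_image_of_injective _ fun i j hij => by simpa using hij
  have hEflip : Disjoint E (E.image flip) := by
    simpa only [Finset.disjoint_right, Finset.forall_mem_image] using hflip
  have hEM : Disjoint (E ∪ E.image flip) M := by
    have flip_match : ∀ i, flip s((i, false), (i, true)) = s((i, false), (i, true)) :=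
      fun i => Sym2.eq_swap
    rw [Finset.disjoint_right, Finset.forall_mem_image]
    simp only [Finset.mem_univ, Finset.mem_union, Finset.mem_image, not_or, forall_const]
    refine fun i => ⟨hmatch i, fun ⟨z, hz, hzi⟩ => hmatch i ?_⟩
    rwa [← flip_match, ← hzi, flip_flip]
  have hsub : (E ∪ E.image flip) ∪ M ⊆ ({z | ¬ z.IsDiag} : Finset (Sym2 (ι × Bool))) := by
    refine Finset.union_subset (Finset.union_subset ?_ ?_) ?_
    · simpa [Finset.subset_iff] using hdiag
    · simpa [Finset.image_subset_iff, flip_isDiag] using hdiag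
    · simp [M, Finset.image_subset_iff]
  have hcard := Finset.card_le_card hsub
  rw [Finset.card_union_of_disjoint hEM, Finset.card_union_of_disjoint hEflip, hM,
    Finset.card_image_of_injective _ flip_flip.injective, card_filter_not_isDiag,
    Fintype.card_prod, Fintype.card_bool, mul_comm, Nat.choose_two_right, mul_assoc,
    Nat.mul_div_cancel_left _ two_pos] at hcard
  rcases hι : Fintype.card ι with _ | k <;> rw [hι] at hcard
  · lia
  · rw [Nat.add_sub_cancel]
    rw [show 2 * (k + 1) - 1 = 2 * k + 1 by lia] at hcard
    lia

variable {L : Type*}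

/-- With `t z` the time at which the pair `z` is built and `τ a` the time from which the label `a`
is known, both labels of `z` are known when `z` is built. -/
def JoinsRevealed (τ : L → ℕ) (t : Sym2 L → ℕ) (z : Sym2 L) : Prop :=
  ∀ a ∈ z, τ a ≤ t z

lemma joinsRevealed_mk {τ : L → ℕ} {t : Sym2 L → ℕ} {a b : L} :
    JoinsRevealed τ t s(a, b) ↔ τ a ≤ t s(a, b) ∧ τ b ≤ t s(a, b) :=
  Sym2.ball

variable {ι κ : Type*}

/-- Labels for the vertices of a clique: `ι` indexes the pairs of a partial matching, and `κ`
indexes the unmatched vertices. -/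
abbrev Label (ι κ : Type*) := (ι × Bool) ⊕ κ

/-- The index of the matched pair, or of the unmatched vertex, that a label belongs to. -/
def Label.block : Label ι κ → ι ⊕ κ := Sum.map Prod.fst id

/-- The `i`-th pair of the matching. -/
def matchingEdge (i : ι) : Sym2 (Label ι κ) := s(.inl (i, false), .inl (i, true))

lemma matchingEdge_eq (i : ι) (x : Bool) :
    (matchingEdge i : Sym2 (Label ι κ)) = s(.inl (i, x), .inl (i, !x)) := by
  cases x
  · rfl
  · exact Sym2.eq_swap

/-- The time from which the labels of a block are known, `t z` being the time at which the pair `z`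
is built: the two labels of a matched pair are known once that pair is built, an unmatched label
once any pair containing it is built. -/
noncomputable def revealTime (t : Sym2 (Label ι κ) → ℕ) : ι ⊕ κ → ℕ
  | .inl i => t (matchingEdge i)
  | .inr u => sInf ((fun b => t s(.inr u, b)) '' {.inr u}ᶜ)

lemma revealTime_inr_le (t : Sym2 (Label ι κ) → ℕ) {u : κ} {b : Label ι κ} (hb : b ≠ .inr u) :
    revealTime t (.inr u) ≤ t s(.inr u, b) :=
  Nat.sInf_le ⟨b, hb, rfl⟩

lemma exists_revealTime_eq [Nontrivial (Label ι κ)] (t : Sym2 (Label ι κ) → ℕ) (a : Label ι κ) :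
    ∃ z, ¬ z.IsDiag ∧ a ∈ z ∧ revealTime t a.block = t z := by
  rcases a with ⟨i, x⟩ | u
  · refine ⟨matchingEdge i, by simp [matchingEdge], ?_, rfl⟩
    rw [matchingEdge_eq i x]
    exact Sym2.mem_mk_left _ _
  · obtain ⟨b, hb, hbt⟩ := Nat.sInf_mem
      ((Set.nonempty_compl_of_nontrivial (Sum.inr u : Label ι κ)).image fun b => t s(.inr u, b))
    exact ⟨s(.inr u, b), fun h => hb h.symm, Sym2.mem_mk_left _ _, hbt.symm⟩

/-- No relabelling makes the matching earlier. The weights `3 ^ t` stand in for the lexicographic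
comparison of the times of the matched pairs, latest first, as long as at most two change. -/
def IsEarliestMatching [Fintype ι] (t : Sym2 (Label ι κ) → ℕ) : Prop :=
  ∀ σ : Equiv.Perm (Label ι κ),
    ∑ i, 3 ^ t (matchingEdge i) ≤ ∑ i, 3 ^ t ((matchingEdge i).map σ)

lemma exists_isEarliestMatching [Fintype ι] [Finite κ] (t : Sym2 (Label ι κ) → ℕ) :
    ∃ σ : Equiv.Perm (Label ι κ), IsEarliestMatching (t ∘ Sym2.map σ) := by
  obtain ⟨σ, hσ⟩ := Finite.exists_min fun σ : Equiv.Perm (Label ι κ) =>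
    ∑ i, 3 ^ t ((matchingEdge i).map σ)
  refine ⟨σ, fun σ' => ?_⟩
  simpa only [Function.comp_apply, Sym2.map_map, Equiv.Perm.coe_mul] using hσ (σ * σ')

namespace IsEarliestMatching

variable [Fintype ι] {t : Sym2 (Label ι κ) → ℕ}

lemma exists_sup_le (ht : IsEarliestMatching t) {A : Finset ι} (hA : A.Nonempty) (hA2 : #A ≤ 2)
    (σ : Equiv.Perm (Label ι κ)) (hσ : ∀ i ∉ A, (matchingEdge i).map σ = matchingEdge i) :
    ∃ i ∈ A, (A.sup fun i => t (matchingEdge i)) ≤ t ((matchingEdge i).map σ) := by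
  by_contra! hlt
  exact (ht σ).not_gt (sum_pow_lt_sum_pow hA (Nat.lt_succ_of_le hA2)
    (fun i hi => by rw [hσ i hi]) hlt)

lemma matched_le_unmatched (ht : IsEarliestMatching t) (i : ι) (x : Bool) (u : κ) :
    t (matchingEdge i) ≤ t s(.inr u, .inl (i, x)) := by
  let σ : Equiv.Perm (Label ι κ) := Equiv.swap (.inr u) (.inl (i, !x))
  have hoff : ∀ l ∉ ({i} : Finset ι), (matchingEdge l).map σ = matchingEdge l := by
    intro l hl
    have hl : l ≠ i := by simpa using hl
    simp [matchingEdge, σ, Equiv.swap_apply_def, hl]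
  have hi : (matchingEdge i).map σ = s(.inr u, .inl (i, x)) := by
    simp [matchingEdge_eq i x, σ, Equiv.swap_apply_def, Sym2.eq_swap]
  simpa [hi] using ht.exists_sup_le (Finset.singleton_nonempty i) (by simp) σ hoff

lemma cross_or_cross (ht : IsEarliestMatching t) {i j : ι} (hij : i ≠ j) (x y : Bool) :
    max (t (matchingEdge i)) (t (matchingEdge j)) ≤ t s(.inl (i, x), .inl (j, y)) ∨
      max (t (matchingEdge i)) (t (matchingEdge j)) ≤ t s(.inl (i, !x), .inl (j, !y)) := by
  let σ : Equiv.Perm (Label ι κ) := Equiv.swap (.inl (i, !x)) (.inl (j, y))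
  have hoff : ∀ l ∉ ({i, j} : Finset ι), (matchingEdge l).map σ = matchingEdge l := by
    intro l hl
    have hl : l ≠ i ∧ l ≠ j := by simpa using hl
    simp [matchingEdge, σ, Equiv.swap_apply_def, hl]
  have hi : (matchingEdge i).map σ = s(.inl (i, x), .inl (j, y)) := by
    simp [matchingEdge_eq i x, σ, Equiv.swap_apply_def, hij]
  have hj : (matchingEdge j).map σ = s(.inl (i, !x), .inl (j, !y)) := by
    simp [matchingEdge_eq j y, σ, Equiv.swap_apply_def, hij.symm]
  simpa [hi, hj] using ht.exists_sup_le (Finset.insert_nonempty i {j}) Finset.card_le_two σ hoff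

lemma joinsRevealed_inr (ht : IsEarliestMatching t) {u : κ} {b : Label ι κ} (hb : b ≠ .inr u) :
    JoinsRevealed (revealTime t ∘ Label.block) t s(.inr u, b) := by
  refine joinsRevealed_mk.mpr ⟨revealTime_inr_le t hb, ?_⟩
  rcases b with ⟨i, x⟩ | w
  · exact ht.matched_le_unmatched i x u
  · rw [Sym2.eq_swap]
    exact revealTime_inr_le t hb.symm

lemma joinsRevealed_or_flip (ht : IsEarliestMatching t) {z : Sym2 (ι × Bool)} (hz : ¬ z.IsDiag) :
    JoinsRevealed (revealTime t ∘ Label.block) t (z.map .inl) ∨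
      JoinsRevealed (revealTime t ∘ Label.block) t ((z.map (Prod.map id not)).map .inl) := by
  induction z with | _ a b
  obtain ⟨⟨i, x⟩, j, y⟩ := a, b
  by_cases hij : i = j
  · subst hij
    obtain rfl : y = !x := Bool.eq_not.mpr fun h => hz (by simp [h])
    left
    simp [joinsRevealed_mk, Label.block, revealTime, matchingEdge_eq i x]
  · simpa [joinsRevealed_mk, Label.block, revealTime] using ht.cross_or_cross hij x y

theorem choose_two_sub_le_card_joinsRevealed [Fintype κ] (ht : IsEarliestMatching t) :
    (Fintype.card (Label ι κ)).choose 2 - Fintype.card ι * (Fintype.card ι - 1) ≤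
      #{z | ¬ z.IsDiag ∧ JoinsRevealed (revealTime t ∘ Label.block) t z} := by
  let E : Finset (Sym2 (ι × Bool)) :=
    {z | ¬ z.IsDiag ∧ ¬ JoinsRevealed (revealTime t ∘ Label.block) t (z.map .inl)}
  have hE : #E ≤ Fintype.card ι * (Fintype.card ι - 1) := by
    refine card_le_of_map_not_notMem (by simp +contextual [E]) (fun i hi => ?_) fun z hz => ?_
    · refine (Finset.mem_filter_univ _ |>.mp hi).2 ?_
      simp [joinsRevealed_mk, Label.block, revealTime, matchingEdge]
    · obtain ⟨hdiag, hz⟩ : ¬ z.IsDiag ∧ _ := by simpa [E] using hz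
      simp [E, (ht.joinsRevealed_or_flip hdiag).resolve_left hz]
  have hnot : ({z | ¬ z.IsDiag ∧ ¬ JoinsRevealed (revealTime t ∘ Label.block) t z} :
      Finset (Sym2 (Label ι κ))) ⊆ E.image (Sym2.map .inl) := by
    intro z hz
    obtain ⟨hdiag, hz⟩ : ¬ z.IsDiag ∧ _ := by simpa using hz
    induction z with | _ a b
    rcases a with p | u
    · rcases b with q | w
      · exact Finset.mem_image.mpr ⟨s(p, q), by simp_all [E], rfl⟩
      · rw [Sym2.eq_swap] at hz
        exact absurd (ht.joinsRevealed_inr Sum.inl_ne_inr) hz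
    · exact absurd (ht.joinsRevealed_inr fun h => hdiag h.symm) hz
  have hcount := Finset.card_filter_add_card_filter_not
    (s := ({z | ¬ z.IsDiag} : Finset (Sym2 (Label ι κ))))
    (JoinsRevealed (revealTime t ∘ Label.block) t)
  rw [card_filter_not_isDiag, Finset.filter_filter, Finset.filter_filter] at hcount
  have := (Finset.card_le_card hnot).trans Finset.card_image_le
  lia

end IsEarliestMatching

end Matching

section Encoding

variable {V L : Type*} {B : List Bool → Sym2 V}

lemma ValidBuilder.injOn_take (hB : ValidBuilder B) (ω : List Bool) :
    Set.InjOn (fun t => B (ω.take t)) (Set.Iio ω.length) := by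
  have hne : ∀ s t, s < t → t < ω.length → B (ω.take s) ≠ B (ω.take t) := fun s t hst ht => by
    simpa [List.take_take, hst.le] using hB.2 (ω.take t) s (by simp [hst, hst.trans ht])
  intro s hs t ht hst
  rcases lt_trichotomy s t with hlt | heq | hlt
  · exact absurd hst (hne s t hlt ht)
  · exact heq
  · exact absurd hst.symm (hne t s hlt hs)

/-- The end of the edge `z` with index `b`. -/
noncomputable def endpoint (z : Sym2 V) (b : Bool) : V := if b then z.out.1 else z.out.2

lemma exists_endpoint_eq {z : Sym2 V} {v : V} (hv : v ∈ z) : ∃ b, endpoint z b = v := by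
  rw [← z.out_eq, Sym2.mem_iff] at hv
  rcases hv with hv | hv
  · exact ⟨true, hv.symm⟩
  · exact ⟨false, hv.symm⟩

/-- The vertex with label `a` after the history `h`, read off from a code `(τ, s)`: the end with
index `s a` of the edge that `B` builds at time `τ a`. -/
noncomputable def decode (B : List Bool → Sym2 V) (τ : L → ℕ) (s : L → Bool) (h : List Bool)
    (a : L) : V :=
  endpoint (B (h.take (τ a))) (s a)

/-- After the history `h`, `B` joins two decoded vertices whose times are not in the future. -/
def JoinsDecoded (B : List Bool → Sym2 V) (τ : L → ℕ) (s : L → Bool) (h : List Bool) : Prop :=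
  ∃ z : Sym2 L, ¬ z.IsDiag ∧ (∀ a ∈ z, τ a ≤ h.length) ∧ B h = z.map (decode B τ s h)

/-- The words `ω` of Painter's colours for which playing `ω` against `B` produces a clique on `k`
vertices in the colour `col`. -/
def cliqueWords (B : List Bool → Sym2 V) (k : ℕ) (col : Bool) : Set (List Bool) :=
  {ω | HasMonoClique (fun t => B (ω.take t)) (fun t => ω.getD t false) ω.length k col}

/-- The vertices `v a` span a clique of colour `col` when `ω` is played against `B`, and the edge
between the vertices labelled by `z` is built at time `T z`. -/
def IsTimedClique (B : List Bool → Sym2 V) (ω : List Bool) (col : Bool) (v : L → V)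
    (T : Sym2 L → ℕ) : Prop :=
  ∀ z : Sym2 L, ¬ z.IsDiag → B (ω.take (T z)) = z.map v ∧ ω[T z]? = some col

lemma exists_isTimedClique [Fintype L] {ω : List Bool} {col : Bool}
    (hω : ω ∈ cliqueWords B (Fintype.card L) col) :
    ∃ (v : L → V) (T : Sym2 L → ℕ), IsTimedClique B ω col v T := by
  obtain ⟨S, hS, hclique⟩ := hω
  let e : L ≃ S := Fintype.equivOfCardEq (by simp [hS])
  have htime : ∀ z : Sym2 L, ∃ t, ¬ z.IsDiag →
      B (ω.take t) = z.map (fun a => (e a : V)) ∧ ω[t]? = some col := by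
    intro z
    induction z with | _ a b
    by_cases hab : a = b
    · exact ⟨0, fun hz => absurd hab hz⟩
    obtain ⟨t, ht, hedge, hcol⟩ := hclique (e a) (e a).2 (e b) (e b).2 (by simpa using hab)
    exact ⟨t, fun _ => ⟨hedge, by simpa [ht] using hcol⟩⟩
  choose T hT using htime
  exact ⟨fun a => e a, T, hT⟩

namespace IsTimedClique

variable {ω : List Bool} {col : Bool} {v : L → V} {T : Sym2 L → ℕ}

lemma lt_length (h : IsTimedClique B ω col v T) {z : Sym2 L} (hz : ¬ z.IsDiag) :
    T z < ω.length :=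
  (List.getElem?_eq_some_iff.mp (h z hz).2).1

lemma injective (h : IsTimedClique B ω col v T) (hB : ValidBuilder B) : Function.Injective v := by
  intro a b hab
  by_contra hne
  have hloop : (s(a, b).map v).IsDiag := hab
  rw [← (h s(a, b) hne).1] at hloop
  exact hB.1 _ hloop

lemma comp_perm (h : IsTimedClique B ω col v T) (σ : Equiv.Perm L) :
    IsTimedClique B ω col (v ∘ σ) (T ∘ Sym2.map σ) := fun z hz => by
  simpa [Sym2.map_map] using h (z.map σ) (by rwa [Sym2.isDiag_map σ.injective])

lemma injOn_time (h : IsTimedClique B ω col v T) (hB : ValidBuilder B) :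
    Set.InjOn T {z | ¬ z.IsDiag} := by
  intro z hz z' hz' hzz'
  apply Sym2.map.injective (h.injective hB)
  rw [← (h z hz).1, ← (h z' hz').1, hzz']

lemma exists_decode_eq (h : IsTimedClique B ω col v T) {τ : L → ℕ}
    (hτ : ∀ a, ∃ z, ¬ z.IsDiag ∧ a ∈ z ∧ τ a = T z) :
    ∃ s : L → Bool, ∀ a t, τ a ≤ t → decode B τ s (ω.take t) a = v a := by
  have hend : ∀ a, ∃ b, endpoint (B (ω.take (τ a))) b = v a := by
    intro a
    obtain ⟨z, hz, haz, hτz⟩ := hτ a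
    apply exists_endpoint_eq
    rw [hτz, (h z hz).1]
    exact Sym2.mem_map.mpr ⟨a, haz, rfl⟩
  choose s hs using hend
  refine ⟨s, fun a t hat => ?_⟩
  rw [decode, List.take_take, min_eq_left hat, hs]

theorem exists_selectsOnly [Fintype L] [DecidableEq L] (h : IsTimedClique B ω col v T)
    (hB : ValidBuilder B) {τ : L → ℕ} (hτ : ∀ a, ∃ z, ¬ z.IsDiag ∧ a ∈ z ∧ τ a = T z) :
    ∃ s : L → Bool,
      SelectsOnly col (JoinsDecoded B τ s) #{z | ¬ z.IsDiag ∧ JoinsRevealed τ T z} ω := by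
  obtain ⟨s, hs⟩ := h.exists_decode_eq hτ
  have hmap : ∀ (z : Sym2 L) (t : ℕ), (∀ a ∈ z, τ a ≤ t) →
      z.map (decode B τ s (ω.take t)) = z.map v := fun z t hz =>
    Sym2.map_congr fun a ha => hs a t (hz a ha)
  refine ⟨s, fun t ht hjoins => ?_, ?_⟩
  · obtain ⟨z, hz, hτz, hedge⟩ := hjoins
    rw [List.length_take, min_eq_left ht.le] at hτz
    rw [hmap z t hτz, ← (h z hz).1] at hedge
    rw [hB.injOn_take ω ht (h.lt_length hz) hedge]
    exact (h z hz).2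
  · refine Finset.card_le_card_of_injOn T (fun z hz => ?_) fun z hz z' hz' => ?_
    · obtain ⟨hz, hrev⟩ : ¬ z.IsDiag ∧ JoinsRevealed τ T z := by simpa using hz
      have hT := h.lt_length hz
      rw [Finset.mem_coe, Finset.mem_filter, Finset.mem_range]
      exact ⟨hT, z, hz, by simpa [hT.le] using! hrev, by rw [hmap z _ hrev, (h z hz).1]⟩
    · exact h.injOn_time hB (by simp_all) (by simp_all)

end IsTimedClique

theorem exists_selectsOnly_of_mem_cliqueWords {ι κ : Type*} [Fintype ι] [Fintype κ]
    [Nontrivial (Label ι κ)] (hB : ValidBuilder B) {ω : List Bool} {col : Bool}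
    (hω : ω ∈ cliqueWords B (Fintype.card (Label ι κ)) col) :
    ∃ τ : ι ⊕ κ → ℕ, (∀ c, τ c < ω.length) ∧ ∃ s : Label ι κ → Bool,
      SelectsOnly col (JoinsDecoded B (τ ∘ Label.block) s)
        ((Fintype.card (Label ι κ)).choose 2 - Fintype.card ι * (Fintype.card ι - 1)) ω := by
  obtain ⟨v, T, hT⟩ := exists_isTimedClique hω
  obtain ⟨σ, hσ⟩ := exists_isEarliestMatching T
  obtain ⟨s, hs⟩ := (hT.comp_perm σ).exists_selectsOnly hB
    (τ := revealTime (T ∘ Sym2.map σ) ∘ Label.block) (exists_revealTime_eq _)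
  refine ⟨revealTime (T ∘ Sym2.map σ), fun c => ?_, s,
    hs.mono hσ.choose_two_sub_le_card_joinsRevealed⟩
  have hblock : ∃ a : Label ι κ, a.block = c := by
    rcases c with i | u
    · exact ⟨.inl (i, true), rfl⟩
    · exact ⟨.inr u, rfl⟩
  obtain ⟨a, rfl⟩ := hblock
  obtain ⟨z, hz, -, hz_time⟩ := exists_revealTime_eq (T ∘ Sym2.map σ) a
  rw [hz_time]
  exact (hT.comp_perm σ).lt_length hz

end Encoding

section UnionBound

theorem toOuterMeasure_cliqueWords_le {V : Type*} {B : List Bool → Sym2 V} (hB : ValidBuilder B)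
    (μ : PMF Bool) {m k : ℕ} (hm : 2 ≤ m) (hk : 2 * k ≤ m) (N : ℕ) (col : Bool) :
    (randomWord μ N).toOuterMeasure (cliqueWords B m col) ≤
      N ^ (m - k) * 2 ^ m * μ col ^ (m.choose 2 - k * (k - 1)) := by
  have hcard : Fintype.card (Label (Fin k) (Fin (m - 2 * k))) = m := by simp; lia
  have : Nontrivial (Label (Fin k) (Fin (m - 2 * k))) :=
    Fintype.one_lt_card_iff_nontrivial.mp (by lia)
  let Code := (Fin k ⊕ Fin (m - 2 * k) → ℕ) × (Label (Fin k) (Fin (m - 2 * k)) → Bool)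
  let codes : Finset Code :=
    (Fintype.piFinset fun _ : Fin k ⊕ Fin (m - 2 * k) => Finset.range N) ×ˢ Finset.univ
  have hcodes : #codes = N ^ (m - k) * 2 ^ m := by
    rw [Finset.card_product, Fintype.card_piFinset, Finset.card_univ, Fintype.card_fun, hcard]
    simp [show k + (m - 2 * k) = m - k by lia]
  let S (c : Code) : Set (List Bool) :=
    {ω | SelectsOnly col (JoinsDecoded B (c.1 ∘ Label.block) c.2) (m.choose 2 - k * (k - 1)) ω}
  have hcover : cliqueWords B m col ∩ (randomWord μ N).support ⊆ ⋃ c ∈ codes, S c := by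
    rintro ω ⟨hω, hsupp⟩
    obtain ⟨τ, hτ, s, hs⟩ := exists_selectsOnly_of_mem_cliqueWords (ι := Fin k)
      (κ := Fin (m - 2 * k)) hB (by rwa [hcard])
    rw [length_eq_of_mem_support_randomWord hsupp] at hτ
    rw [hcard, Fintype.card_fin] at hs
    exact Set.mem_biUnion (x := (τ, s))
      (Finset.mem_product.mpr ⟨by simpa using hτ, Finset.mem_univ s⟩) hs
  calc (randomWord μ N).toOuterMeasure (cliqueWords B m col)
      ≤ (randomWord μ N).toOuterMeasure (⋃ c ∈ codes, S c) := PMF.toOuterMeasure_mono _ hcover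
    _ ≤ ∑ c ∈ codes, (randomWord μ N).toOuterMeasure (S c) :=
        MeasureTheory.measure_biUnion_finset_le _ _
    _ ≤ #codes • μ col ^ (m.choose 2 - k * (k - 1)) :=
        Finset.sum_le_card_nsmul _ _ _ fun _ _ => toOuterMeasure_selectsOnly_le _ _ _ _ _
    _ = N ^ (m - k) * 2 ^ m * μ col ^ (m.choose 2 - k * (k - 1)) := by
        rw [hcodes, nsmul_eq_mul]
        push_cast
        rfl

lemma histOf_getD (ω : List Bool) {t : ℕ} (ht : t ≤ ω.length) :
    histOf (fun h => ω.getD h.length false) t = ω.take t := by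
  induction t with
  | zero => rfl
  | succ t ih =>
    rw [histOf, ih (by lia), List.length_take, min_eq_left (by lia), ← List.take_concat_get' _ _ ht,
      List.getD_eq_getElem _ _ ht]

lemma HasMonoClique.congr {V : Type*} {edge edge' : ℕ → Sym2 V} {color color' : ℕ → Bool}
    {N k : ℕ} {col : Bool} (h : HasMonoClique edge color N k col)
    (hedge : ∀ t < N, edge t = edge' t) (hcolor : ∀ t < N, color t = color' t) :
    HasMonoClique edge' color' N k col := by
  obtain ⟨S, hS, hclique⟩ := h
  refine ⟨S, hS, fun u hu v hv huv => ?_⟩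
  obtain ⟨t, ht, het, hct⟩ := hclique u hu v hv huv
  exact ⟨t, ht, hedge t ht ▸ het, hcolor t ht ▸ hct⟩

lemma BuilderWins.exists_mem_cliqueWords {m n N : ℕ} (h : BuilderWins m n N) :
    ∃ B : List Bool → Sym2 ℕ, ValidBuilder B ∧
      ∀ ω : List Bool, ω.length = N → ω ∈ cliqueWords B m true ∪ cliqueWords B n false := by
  obtain ⟨B, hB, hwin⟩ := h
  refine ⟨B, hB, fun ω hω => ?_⟩
  subst hω
  have hhist : ∀ t < ω.length, histOf (fun h => ω.getD h.length false) t = ω.take t :=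
    fun t ht => histOf_getD ω ht.le
  refine (hwin fun h => ω.getD h.length false).imp ?_ ?_ <;>
  exact fun hclique => hclique.congr (fun t ht => by rw [hhist t ht])
    fun t ht => by rw [hhist t ht, List.length_take, min_eq_left ht.le]

theorem not_builderWins {m n k N : ℕ} (hm : 2 ≤ m) (hk : 2 * k ≤ m) (hn : 2 ≤ n) {p : ℝ}
    (hp0 : 0 ≤ p) (hp1 : p ≤ 1)
    (h : N ^ (m - k) * 2 ^ m * p ^ (m.choose 2 - k * (k - 1)) +
      N ^ n * 2 ^ n * (1 - p) ^ n.choose 2 < 1) :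
    ¬ BuilderWins m n N := by
  intro hwin
  obtain ⟨B, hB, hB_win⟩ := hwin.exists_mem_cliqueWords
  lift p to NNReal using hp0
  have hp1 : p ≤ 1 := mod_cast hp1
  let μ : PMF Bool := PMF.ofFintype (fun col => ((bif col then p else 1 - p : NNReal) : ℝ≥0∞)) (by
    rw [Fintype.sum_bool, cond_true, cond_false, ← ENNReal.coe_add, add_tsub_cancel_of_le hp1,
      ENNReal.coe_one])
  have htrue : μ true = p := rfl
  have hfalse : μ false = (1 - p : NNReal) := rfl
  have hlt : (N ^ (m - k) * 2 ^ m * p ^ (m.choose 2 - k * (k - 1)) +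
      N ^ n * 2 ^ n * (1 - p) ^ n.choose 2 : NNReal) < 1 := by
    rw [← NNReal.coe_lt_coe]
    push_cast [NNReal.coe_sub hp1]
    exact h
  refine lt_irrefl (1 : ℝ≥0∞) ?_
  calc (1 : ℝ≥0∞)
      = (randomWord μ N).toOuterMeasure (cliqueWords B m true ∪ cliqueWords B n false) :=
        ((PMF.toOuterMeasure_apply_eq_one_iff _ _).mpr fun ω hω =>
          hB_win ω (length_eq_of_mem_support_randomWord hω)).symm
    _ ≤ _ := MeasureTheory.measure_union_le _ _
    _ ≤ N ^ (m - k) * 2 ^ m * μ true ^ (m.choose 2 - k * (k - 1)) +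
          N ^ n * 2 ^ n * μ false ^ n.choose 2 := by
        gcongr
        · exact toOuterMeasure_cliqueWords_le hB μ hm hk N true
        · simpa using toOuterMeasure_cliqueWords_le hB μ hn (k := 0) (by simp) N false
    _ < 1 := by
        rw [htrue, hfalse]
        exact_mod_cast hlt

end UnionBound

section Asymptotics

/-- The probability with which Painter colours an edge red. -/
noncomputable def redProb (m n : ℕ) : ℝ := (n : ℝ) ^ (1 / (m : ℝ) - 1)

/-- The number of matched pairs in the encoding of a red clique on `m` vertices: the minimizer
`(2 - √2) * m / 2` of the final bound, rounded down. -/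
noncomputable def matchingSize (m : ℕ) : ℕ := ⌊(2 - √2) * m / 2⌋₊

lemma redProb_nonneg (m n : ℕ) : 0 ≤ redProb m n := by
  unfold redProb
  positivity

lemma redProb_le_one {m n : ℕ} (hm : 1 ≤ m) (hn : 1 ≤ n) : redProb m n ≤ 1 := by
  refine Real.rpow_le_one_of_one_le_of_nonpos (mod_cast hn) ?_
  rw [sub_nonpos, div_le_one (by positivity)]
  exact_mod_cast hm

lemma redProb_mul_self (m : ℕ) {n : ℕ} (hn : 1 ≤ n) :
    redProb m n * n = (n : ℝ) ^ (1 / (m : ℝ)) := by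
  rw [redProb, ← Real.rpow_add_one (by positivity), sub_add_cancel]

lemma matchingSize_le (m : ℕ) : (matchingSize m : ℝ) ≤ (2 - √2) * m / 2 := by
  have : √2 ≤ 2 := Real.sqrt_le_iff.mpr (by norm_num)
  exact Nat.floor_le (div_nonneg (mul_nonneg (by linarith) m.cast_nonneg) zero_le_two)

lemma two_mul_matchingSize_le (m : ℕ) : 2 * matchingSize m ≤ m := by
  have h := matchingSize_le m
  have : (1 : ℝ) * m ≤ √2 * m := by
    gcongr
    exact Real.one_le_sqrt.mpr one_le_two
  exact_mod_cast (by linarith : (2 : ℝ) * matchingSize m ≤ m)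

lemma cast_mul_sub_one (k : ℕ) : ((k * (k - 1) : ℕ) : ℝ) = k * (k - 1) := by
  cases k <;> simp

lemma sub_le_cast_choose_two_sub (m k : ℕ) :
    (m * (m - 1) / 2 - k * (k - 1) : ℝ) ≤ (m.choose 2 - k * (k - 1) : ℕ) := by
  rw [← cast_mul_sub_one k, ← Nat.cast_choose_two, sub_le_iff_le_add]
  exact_mod_cast le_tsub_add

lemma red_exponent_le_neg_one {m k : ℕ} {Q : ℝ} (hm : 1 ≤ m) (hk : k ≤ (2 - √2) * m / 2)
    (hk' : (2 - √2) * m / 2 < k + 1) (hQ : m * (m - 1) / 2 - k * (k - 1) ≤ Q) :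
    ((2 - √2) * m - 4) * (m - k) + (1 / m - 1) * Q ≤ -1 := by
  have hm0 : (1 : ℝ) ≤ m := mod_cast hm
  have hkk : (0 : ℝ) ≤ k * (k - 1) := by
    rw [← cast_mul_sub_one]
    positivity
  have hQ_le : (1 / m - 1) * Q ≤ (m - 1) / 2 - (m * (m - 1) / 2 - k * (k - 1)) := calc
    (1 / m - 1) * Q ≤ (1 / m - 1) * (m * (m - 1) / 2 - k * (k - 1)) := by
      refine mul_le_mul_of_nonpos_left hQ ?_
      rw [sub_nonpos]
      exact div_le_one_of_le₀ hm0 (by positivity)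
    _ = (m - 1) / 2 - (m * (m - 1) / 2 - k * (k - 1)) - k * (k - 1) / m := by
      field_simp
      ring
    _ ≤ (m - 1) / 2 - (m * (m - 1) / 2 - k * (k - 1)) := sub_le_self _ (by positivity)
  have hsquare : (2 - √2) * m * (m - k) - m * (m - 1) / 2 + k * (k - 1) =
      ((2 - √2) * m / 2 - k) ^ 2 + m / 2 - k := by
    linear_combination (-(m ^ 2 : ℝ) / 4) * Real.sq_sqrt (zero_le_two : (0 : ℝ) ≤ 2)
  have hsquare_le : ((2 - √2) * m / 2 - k) ^ 2 ≤ 1 :=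
    pow_le_one₀ (sub_nonneg.mpr hk) (by linarith)
  have hk_half : (k : ℝ) ≤ m / 2 := by
    nlinarith [Real.one_le_sqrt.mpr (one_le_two : (1 : ℝ) ≤ 2)]
  linarith

theorem pow_mul_redProb_pow_le {m n N : ℕ} (hm : 1 ≤ m) (hn : 1 ≤ n)
    (hN : (N : ℝ) ≤ (n : ℝ) ^ ((2 - √2) * m - 4)) :
    (N : ℝ) ^ (m - matchingSize m) *
      redProb m n ^ (m.choose 2 - matchingSize m * (matchingSize m - 1)) ≤ (n : ℝ)⁻¹ := by
  set k := matchingSize m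
  set Q := m.choose 2 - k * (k - 1)
  have hkm : k ≤ m := by have := two_mul_matchingSize_le m; lia
  calc (N : ℝ) ^ (m - k) * redProb m n ^ Q
      ≤ ((n : ℝ) ^ ((2 - √2) * m - 4)) ^ (m - k) * redProb m n ^ Q := by
        have := redProb_nonneg m n
        gcongr
    _ = (n : ℝ) ^ (((2 - √2) * m - 4) * (m - k) + (1 / m - 1) * Q) := by
        rw [redProb, ← Real.rpow_mul_natCast n.cast_nonneg, ← Real.rpow_mul_natCast n.cast_nonneg,
          ← Real.rpow_add (by positivity), Nat.cast_sub hkm]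
    _ ≤ (n : ℝ) ^ (-1 : ℝ) := by
        refine Real.rpow_le_rpow_of_exponent_le (mod_cast hn) ?_
        exact red_exponent_le_neg_one hm (matchingSize_le m) (Nat.lt_floor_add_one _)
          (sub_le_cast_choose_two_sub m k)
    _ = (n : ℝ)⁻¹ := Real.rpow_neg_one _

theorem eventually_red_bound {m : ℕ} (hm : 1 ≤ m) :
    ∀ᶠ n : ℕ in atTop, ∀ N : ℕ, (N : ℝ) ≤ (n : ℝ) ^ ((2 - √2) * m - 4) →
      (N : ℝ) ^ (m - matchingSize m) * 2 ^ m *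
        redProb m n ^ (m.choose 2 - matchingSize m * (matchingSize m - 1)) < 1 / 2 := by
  filter_upwards [eventually_gt_atTop (2 ^ (m + 1))] with n hn N hN
  have hn1 : 1 ≤ n := Nat.one_le_two_pow.trans hn.le
  have hn2 : (2 : ℝ) ^ (m + 1) < n := mod_cast hn
  rw [mul_right_comm]
  calc _ ≤ (n : ℝ)⁻¹ * 2 ^ m := by
        gcongr
        exact pow_mul_redProb_pow_le hm hn1 hN
    _ < 1 / 2 := by
        rw [inv_mul_lt_iff₀ (by positivity)]
        linarith [pow_succ (2 : ℝ) m]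

lemma one_sub_redProb_pow_le {m n : ℕ} (hm : 1 ≤ m) (hn : 2 ≤ n) :
    (1 - redProb m n) ^ n.choose 2 ≤ Real.exp (-((n : ℝ) ^ (1 / (m : ℝ)) / 4)) ^ n := by
  have hp := redProb_nonneg m n
  have hp1 : redProb m n ≤ 1 := redProb_le_one hm (by lia)
  have hn' : (2 : ℝ) ≤ n := mod_cast hn
  rw [← redProb_mul_self m (by lia)]
  calc (1 - redProb m n) ^ n.choose 2
      ≤ Real.exp (-redProb m n) ^ n.choose 2 := by
        exact pow_le_pow_left₀ (sub_nonneg.mpr hp1) (Real.one_sub_le_exp_neg _) _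
    _ = Real.exp (n * (n - 1) / 2 * -redProb m n) := by
        rw [← Real.exp_nat_mul, Nat.cast_choose_two]
    _ ≤ Real.exp (n * -(redProb m n * n / 4)) := by
        have : 0 ≤ redProb m n * n * (n - 2) := mul_nonneg (by positivity) (by linarith)
        exact Real.exp_le_exp.mpr (by linarith)
    _ = _ := Real.exp_nat_mul _ _

lemma tendsto_pow_mul_exp_neg_rpow {m : ℕ} (hm : 1 ≤ m) :
    Tendsto (fun n : ℕ => (n : ℝ) ^ m * Real.exp (-((n : ℝ) ^ (1 / (m : ℝ)) / 4))) atTop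
      (nhds 0) := by
  have hroot : Tendsto (fun n : ℕ => (n : ℝ) ^ (1 / (m : ℝ)) / 4) atTop atTop :=
    ((tendsto_rpow_atTop (by positivity)).comp tendsto_natCast_atTop_atTop).atTop_div_const
      (by norm_num)
  have h := ((Real.tendsto_pow_mul_exp_neg_atTop_nhds_zero (m * m)).comp hroot).const_mul
    (4 ^ (m * m))
  rw [mul_zero] at h
  refine h.congr fun n => ?_
  have hpow : ((n : ℝ) ^ (1 / (m : ℝ))) ^ (m * m) = (n : ℝ) ^ m := by
    rw [pow_mul, one_div, Real.rpow_inv_natCast_pow n.cast_nonneg (by lia)]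
  rw [Function.comp_apply, div_pow, hpow]
  field_simp

theorem eventually_blue_bound {m : ℕ} (hm : 1 ≤ m) :
    ∀ᶠ n : ℕ in atTop, ∀ N : ℕ, (N : ℝ) ≤ (n : ℝ) ^ ((2 - √2) * m - 4) →
      (N : ℝ) ^ n * 2 ^ n * (1 - redProb m n) ^ n.choose 2 ≤ 1 / 2 := by
  filter_upwards [eventually_ge_atTop 2, (tendsto_pow_mul_exp_neg_rpow hm).eventually_le_const
    (by norm_num : (0 : ℝ) < 1 / 4)] with n hn hsmall N hN
  have hp : 0 ≤ (1 - redProb m n) ^ n.choose 2 :=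
    pow_nonneg (sub_nonneg.mpr (redProb_le_one hm (by lia))) _
  have hNm : (N : ℝ) ≤ (n : ℝ) ^ m := by
    refine hN.trans ?_
    rw [← Real.rpow_natCast]
    refine Real.rpow_le_rpow_of_exponent_le (by exact_mod_cast (by lia : 1 ≤ n)) ?_
    nlinarith [Real.one_le_sqrt.mpr (one_le_two : (1 : ℝ) ≤ 2), (m.cast_nonneg : (0 : ℝ) ≤ m)]
  set ε := Real.exp (-((n : ℝ) ^ (1 / (m : ℝ)) / 4))
  calc (N : ℝ) ^ n * 2 ^ n * (1 - redProb m n) ^ n.choose 2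
      ≤ ((n : ℝ) ^ m) ^ n * 2 ^ n * ε ^ n := by
        gcongr
        exact one_sub_redProb_pow_le hm hn
    _ = (2 * ((n : ℝ) ^ m * ε)) ^ n := by ring
    _ ≤ (1 / 2) ^ n := by
        gcongr
        linarith
    _ ≤ 1 / 2 := pow_le_of_le_one (by norm_num) (by norm_num) (by lia)

end Asymptotics

theorem stmt2 :
    ∃ C : ℝ, 0 < C ∧ ∀ m : ℕ, 3 ≤ m → ∃ n₀ : ℕ, ∀ n : ℕ, n₀ ≤ n →
      (n : ℝ) ^ ((2 - Real.sqrt 2) * (m : ℝ) - C) ≤ (onlineRamsey m n : ℝ) := by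
  refine ⟨4, by norm_num, fun m hm => eventually_atTop.mp ?_⟩
  have hm1 : 1 ≤ m := by lia
  filter_upwards [eventually_ge_atTop 2, eventually_red_bound hm1, eventually_blue_bound hm1]
    with n hn hred hblue
  by_contra! hlt
  have hunion := add_lt_add_of_lt_of_le (hred _ hlt.le) (hblue _ hlt.le)
  rw [add_halves] at hunion
  exact not_builderWins (by lia) (two_mul_matchingSize_le m) hn (redProb_nonneg m n)
    (redProb_le_one hm1 (by lia)) hunion (Nat.sInf_mem (exists_builderWins m n))

end OnlineRamseyGame
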